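/- Let x, y, z be real numbers with 2/3 <= x < 1, 0 <= y < 1 and 0 <= z < 1. Then floor(3x) - floor(y+z) - floor(3x - y - z) - floor(y - x) - floor(z - x) >= 1. -/

import Mathlib

theorem stmt_6 (x y z : ℝ) (hx1 : 2 / 3 ≤ x) (hx2 : x < 1)
    (hy1 : 0 ≤ y) (hy2 : y < 1) (hz1 : 0 ≤ z) (hz2 : z < 1) :
    1 ≤ ⌊3 * x⌋ - ⌊y + z⌋ - ⌊3 * x - y - z⌋ - ⌊y - x⌋ - ⌊z - x⌋ := by
  have h3 : 2 ≤ ⌊3 * x⌋ := Int.le_floor.2 (by push_cast; linarith)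
  have hs : ⌊y + z⌋ + ⌊3 * x - y - z⌋ ≤ ⌊3 * x⌋ := by
    have h := Int.le_floor_add (y + z) (3 * x - y - z)
    rwa [show y + z + (3 * x - y - z) = 3 * x by ring] at h
  have hy : ⌊y - x⌋ < 1 := Int.floor_lt.2 (by push_cast; linarith)
  have hz : ⌊z - x⌋ < 1 := Int.floor_lt.2 (by push_cast; linarith)
  rcases lt_or_ge y x with h | h
  · have : ⌊y - x⌋ < 0 := Int.floor_lt.2 (by push_cast; linarith)
    omega
  rcases lt_or_ge z x with h' | h'
  · have : ⌊z - x⌋ < 0 := Int.floor_lt.2 (by push_cast; linarith)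
    omega
  have h1 : ⌊y + z⌋ < 2 := Int.floor_lt.2 (by push_cast; linarith)
  have h2 : ⌊3 * x - y - z⌋ < 1 := Int.floor_lt.2 (by push_cast; linarith)
  omega
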